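/- There is a universal constant C > 0 such that the following holds. Let X ⊆ ℝ be a nonempty compact interval of diameter D > 0, f : X → ℝ convex and G-Lipschitz with G > 0, f* = min_{x∈X} f, T ≥ 1 an integer, S = {x ∈ X : f(x) − f* ≤ GD/√T}, and η = 4D/(G√T). Let (x_i)_{i≥0} be an SGD process with fixed step size η such that, in addition, for fixed constants 0 < ε ≤ 1 and 0 < c ≤ 1, whenever x_t ∉ S the conditional expectation satisfies |E[ĝ_t | F_t]| ∈ [cεG, εG] almost surely (the nearly linear condition). Then E[f(x_T) − f*] ≤ C·GD/(c·√T). -/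

import Mathlib

open MeasureTheory

/-- Projection onto the interval `[A, B]`. -/
noncomputable def projInterval (A B r : ℝ) : ℝ := max A (min B r)

noncomputable def resid (p q x : ℝ) : ℝ := x - max p (min q x)

lemma resid_cont (p q : ℝ) : Continuous (resid p q) := by
  unfold resid; fun_prop

lemma proj_mem {A B r : ℝ} (h : A ≤ B) : projInterval A B r ∈ Set.Icc A B := by
  unfold projInterval
  exact ⟨le_max_left _ _, max_le h (min_le_left _ _)⟩

lemma proj_near {A B r y : ℝ} (hy : y ∈ Set.Icc A B) : |projInterval A B r - y| ≤ |r - y| := by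
  unfold projInterval
  obtain ⟨h1, h2⟩ := hy
  rcases le_total B r with h | h
  · rw [min_eq_left h, max_eq_right (h1.trans h2), abs_of_nonneg (by linarith),
      abs_of_nonneg (by linarith)]; linarith
  · rw [min_eq_right h]
    rcases le_total A r with h' | h'
    · rw [max_eq_right h']
    · rw [max_eq_left h', abs_of_nonpos (by linarith), abs_of_nonpos (by linarith)]; linarith

lemma resid_near {p q x y : ℝ} (hy : y ∈ Set.Icc p q) : |resid p q x| ≤ |x - y| := by
  unfold resid
  obtain ⟨h1, h2⟩ := hy
  rcases le_total q x with h | h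
  · rw [min_eq_left h, max_eq_right (h1.trans h2), abs_of_nonneg (by linarith),
      abs_of_nonneg (by linarith)]; linarith
  · rw [min_eq_right h]
    rcases le_total p x with h' | h'
    · rw [max_eq_right h']; simp
    · rw [max_eq_left h', abs_of_nonpos (by linarith), abs_of_nonpos (by linarith)]; linarith

lemma clamp_mem {p q x : ℝ} (h : p ≤ q) : max p (min q x) ∈ Set.Icc p q :=
  ⟨le_max_left _ _, max_le h (min_le_left _ _)⟩

lemma resid_eq_zero {p q x : ℝ} (h : x ∈ Set.Icc p q) : resid p q x = 0 := by
  unfold resid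
  rw [min_eq_right h.2, max_eq_right h.1, sub_self]

lemma abs_cosh_eq (u : ℝ) : |Real.cosh u| = Real.cosh u := abs_of_pos (Real.cosh_pos u)

lemma cosh_step (u w b : ℝ) (hw : |w| ≤ b) (hb : b ≤ 1) :
    Real.cosh (u - w) ≤ Real.cosh u * (1 + b ^ 2) - w * Real.sinh u := by
  have h1 := (abs_le.1 (Real.abs_exp_sub_one_sub_id_le (x := w) (hw.trans hb))).2
  have h2 := (abs_le.1 (Real.abs_exp_sub_one_sub_id_le (x := -w)
    (by rw [abs_neg]; exact hw.trans hb))).2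
  have h3 : w ^ 2 ≤ b ^ 2 := by rw [← sq_abs]; gcongr
  rw [Real.cosh_eq, Real.cosh_eq, Real.sinh_eq]
  have e1 : Real.exp (u - w) = Real.exp u * Real.exp (-w) := by rw [← Real.exp_add]; ring_nf
  have e2 : Real.exp (-(u - w)) = Real.exp (-u) * Real.exp w := by rw [← Real.exp_add]; ring_nf
  rw [e1, e2]
  have p1 := Real.exp_pos u
  have p2 := Real.exp_pos (-u)
  have k1 : Real.exp u * Real.exp (-w) ≤ Real.exp u * (1 - w + b ^ 2) := by
    gcongr; linarith
  have k2 : Real.exp (-u) * Real.exp w ≤ Real.exp (-u) * (1 + w + b ^ 2) := by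
    gcongr; linarith
  linarith

lemma cosh_sub_one_le (u : ℝ) : Real.cosh u - 1 ≤ |Real.sinh u| := by
  rw [← Real.cosh_abs, Real.abs_sinh]
  have h : Real.exp (-|u|) ≤ 1 := by simp
  linarith [Real.cosh_sub_sinh |u|]

lemma abs_le_cosh (u : ℝ) : |u| ≤ Real.cosh u := by
  rw [← Real.cosh_abs]
  exact (Real.self_le_sinh_iff.2 (abs_nonneg u)).trans (Real.sinh_lt_cosh _).le

/-- One step of the Lyapunov argument. -/
lemma one_step {Ω : Type} {m m0 : MeasurableSpace Ω} {μ : Measure Ω} [IsProbabilityMeasure μ]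
    (hm : m ≤ m0) (R R' g : Ω → ℝ) (G D η l γ : ℝ) (hη : 0 < η) (hl : 0 < l)
    (hγ1 : γ ≤ 1) (hlG : l * η * G = γ / 2)
    (hR : Measurable[m] R) (hR' : Measurable[m0] R') (hg : Measurable[m0] g)
    (hRD : ∀ ω, |R ω| ≤ D) (hR'D : ∀ ω, |R' ω| ≤ D)
    (hgG : ∀ᵐ ω ∂μ, |g ω| ≤ G)
    (hstep : ∀ ω, |R' ω| ≤ |R ω - η * g ω|)
    (hdrift : ∀ᵐ ω ∂μ, γ * G * |Real.sinh (l * R ω)| ≤ (μ[g | m]) ω * Real.sinh (l * R ω)) :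
    ∫ ω, Real.cosh (l * R' ω) ∂μ ≤ (1 - γ ^ 2 / 4) * ∫ ω, Real.cosh (l * R ω) ∂μ + γ ^ 2 / 2 := by
  have hRm0 : Measurable[m0] R := hR.mono hm le_rfl
  have bcosh : ∀ r : ℝ, |r| ≤ D → ‖Real.cosh (l * r)‖ ≤ Real.cosh (l * D) := by
    intro r hr
    rw [Real.norm_eq_abs, abs_cosh_eq, Real.cosh_le_cosh, abs_mul, abs_mul]
    exact mul_le_mul_of_nonneg_left (hr.trans (le_abs_self _)) (abs_nonneg l)
  have bsinh : ∀ r : ℝ, |r| ≤ D → ‖Real.sinh (l * r)‖ ≤ Real.cosh (l * D) := by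
    intro r hr
    refine le_trans ?_ (bcosh r hr)
    rw [Real.norm_eq_abs, Real.norm_eq_abs, Real.abs_sinh, abs_cosh_eq, ← Real.cosh_abs]
    exact (Real.sinh_lt_cosh _).le
  have iC' : Integrable (fun ω => Real.cosh (l * R' ω)) μ :=
    Integrable.of_bound (by fun_prop) _ (ae_of_all _ fun ω => bcosh _ (hR'D ω))
  have iC : Integrable (fun ω => Real.cosh (l * R ω)) μ :=
    Integrable.of_bound (by fun_prop) _ (ae_of_all _ fun ω => bcosh _ (hRD ω))
  have iS : Integrable (fun ω => Real.sinh (l * R ω)) μ :=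
    Integrable.of_bound (by fun_prop) _ (ae_of_all _ fun ω => bsinh _ (hRD ω))
  have ig : Integrable g μ := Integrable.of_bound hg.aestronglyMeasurable G hgG
  have igS : Integrable (fun ω => g ω * Real.sinh (l * R ω)) μ :=
    ig.mul_bdd (c := Real.cosh (l * D)) iS.aestronglyMeasurable
      (ae_of_all _ fun ω => bsinh _ (hRD ω))
  have hSm : StronglyMeasurable[m] (fun ω => Real.sinh (l * R ω)) := by
    have : Measurable[m] (fun ω => Real.sinh (l * R ω)) :=
      Real.measurable_sinh.comp (hR.const_mul l)
    exact this.stronglyMeasurable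
  have hce : ∫ ω, g ω * Real.sinh (l * R ω) ∂μ = ∫ ω, (μ[g | m]) ω * Real.sinh (l * R ω) ∂μ := by
    rw [← integral_condExp hm]
    exact integral_congr_ae (condExp_mul_of_stronglyMeasurable_right hSm igS ig)
  have imS : Integrable (fun ω => (μ[g | m]) ω * Real.sinh (l * R ω)) μ :=
    (integrable_condExp (m := m) (f := g) (μ := μ)).mul_bdd (c := Real.cosh (l * D))
      iS.aestronglyMeasurable (ae_of_all _ fun ω => bsinh _ (hRD ω))
  have hG0 : 0 ≤ G := by
    obtain ⟨ω, hω⟩ := hgG.exists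
    exact (abs_nonneg _).trans hω
  have hγ0 : 0 ≤ γ := by nlinarith [mul_nonneg (mul_nonneg hl.le hη.le) hG0]
  have step1 : ∫ ω, Real.cosh (l * R' ω) ∂μ ≤
      ∫ ω, ((1 + γ ^ 2 / 4) * Real.cosh (l * R ω) - l * η * (g ω * Real.sinh (l * R ω))) ∂μ := by
    refine integral_mono_ae iC' ((iC.const_mul _).sub (igS.const_mul _)) ?_
    filter_upwards [hgG] with ω hω
    have hw : |l * η * g ω| ≤ γ / 2 := by
      rw [abs_mul, abs_of_pos (mul_pos hl hη), ← hlG]; gcongr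
    have h1 := cosh_step (l * R ω) (l * η * g ω) (γ / 2) hw (by linarith)
    have h2 : Real.cosh (l * R' ω) ≤ Real.cosh (l * R ω - l * η * g ω) := by
      rw [Real.cosh_le_cosh]
      have : l * R ω - l * η * g ω = l * (R ω - η * g ω) := by ring
      rw [this, abs_mul, abs_mul]
      exact mul_le_mul_of_nonneg_left (hstep ω) (abs_nonneg l)
    nlinarith
  rw [integral_sub (iC.const_mul _) (igS.const_mul _), integral_const_mul, integral_const_mul,
    hce] at step1
  have step2 : ∫ ω, (γ * G * (Real.cosh (l * R ω) - 1)) ∂μ ≤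
      ∫ ω, (μ[g | m]) ω * Real.sinh (l * R ω) ∂μ := by
    refine integral_mono_ae ((iC.sub (integrable_const 1)).const_mul _) imS ?_
    filter_upwards [hdrift] with ω hω
    refine le_trans ?_ hω
    have := cosh_sub_one_le (l * R ω)
    gcongr
  rw [integral_const_mul, integral_sub iC (integrable_const 1)] at step2
  simp only [integral_const, probReal_univ, smul_eq_mul, mul_one] at step2
  have step3 := mul_le_mul_of_nonneg_left step2 (mul_pos hl hη).le
  have e : l * η * (γ * G * (∫ ω, Real.cosh (l * R ω) ∂μ - 1)) =
      γ ^ 2 / 2 * (∫ ω, Real.cosh (l * R ω) ∂μ - 1) := by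
    linear_combination (γ * (∫ ω, Real.cosh (l * R ω) ∂μ - 1)) * hlG
  rw [e] at step3
  linarith

lemma final_num (T : ℕ) (γ : ℝ) (h0 : 0 < γ) (h1 : γ ≤ 1) :
    (1 - γ ^ 2 / 4) ^ T * Real.exp (γ * Real.sqrt T / 8) ≤ 2 := by
  have h : (1 - γ ^ 2 / 4) ^ T ≤ Real.exp (-(γ ^ 2 / 4) * T) := by
    have : 1 - γ ^ 2 / 4 ≤ Real.exp (-(γ ^ 2 / 4)) := by
      linarith [Real.add_one_le_exp (-(γ ^ 2 / 4))]
    calc _ ≤ (Real.exp (-(γ ^ 2 / 4))) ^ T := pow_le_pow_left₀ (by nlinarith) this T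
      _ = _ := by rw [← Real.exp_nat_mul]; ring_nf
  calc _ ≤ Real.exp (-(γ ^ 2 / 4) * T) * Real.exp (γ * Real.sqrt T / 8) := by gcongr
    _ = Real.exp (-(γ ^ 2 / 4) * T + γ * Real.sqrt T / 8) := by rw [Real.exp_add]
    _ ≤ Real.exp (Real.log 2) := by
        gcongr
        have hs : (Real.sqrt T) ^ 2 = T := Real.sq_sqrt (Nat.cast_nonneg T)
        have e : -(γ ^ 2 / 4) * (T : ℝ) = -(γ ^ 2 / 4) * (Real.sqrt T) ^ 2 := by rw [hs]
        rw [e]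
        nlinarith [Real.log_two_gt_d9, sq_nonneg (γ * Real.sqrt T / 2 - 1 / 8)]
    _ = 2 := Real.exp_log (by norm_num)

lemma level_set (A B G k : ℝ) (hAB : A < B) (hk : 0 ≤ k) (f : ℝ → ℝ)
    (hconv : ConvexOn ℝ (Set.Icc A B) f) (hG : 0 < G)
    (hlip : ∀ u ∈ Set.Icc A B, ∀ v ∈ Set.Icc A B, |f u - f v| ≤ G * |u - v|) :
    ∃ p q : ℝ, p ≤ q ∧ (∀ y, y ∈ Set.Icc p q ↔
      (y ∈ Set.Icc A B ∧ f y - sInf (f '' Set.Icc A B) ≤ k)) ∧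
      ∀ y ∈ Set.Icc A B, 0 ≤ f y - sInf (f '' Set.Icc A B) := by
  have hcont : ContinuousOn f (Set.Icc A B) := by
    have : LipschitzOnWith G.toNNReal f (Set.Icc A B) := by
      refine LipschitzOnWith.of_dist_le_mul fun u hu v hv => ?_
      rw [Real.dist_eq, Real.dist_eq, Real.coe_toNNReal _ hG.le]
      exact hlip u hu v hv
    exact this.continuousOn
  obtain ⟨z, hz, hmin⟩ := isCompact_Icc.exists_isMinOn (Set.nonempty_Icc.2 hAB.le) hcont
  have hinf : sInf (f '' Set.Icc A B) = f z := by
    refine IsLeast.csInf_eq ⟨⟨z, hz, rfl⟩, ?_⟩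
    rintro _ ⟨y, hy, rfl⟩
    exact hmin hy
  rw [hinf]
  set S : Set ℝ := {y | y ∈ Set.Icc A B ∧ f y ≤ f z + k} with hS
  have hSc : IsCompact S := by
    refine isCompact_Icc.of_isClosed_subset ?_ (fun y hy => hy.1)
    exact hcont.preimage_isClosed_of_isClosed isClosed_Icc isClosed_Iic
  have hzS : z ∈ S := ⟨hz, by linarith⟩
  have hcvx : Convex ℝ S := hconv.convex_le (f z + k)
  have hconn : IsConnected S := ⟨⟨z, hzS⟩, hcvx.isPreconnected⟩
  have hE := eq_Icc_of_connected_compact hconn hSc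
  refine ⟨sInf S, sSup S, ?_, ?_, fun y hy => sub_nonneg.2 (hmin hy)⟩
  · have : z ∈ Set.Icc (sInf S) (sSup S) := hE ▸ hzS
    exact this.1.trans this.2
  · intro y
    rw [← hE, hS, Set.mem_ofPred_eq, sub_le_iff_le_add']

theorem stmt15 :
    ∃ C : ℝ, 0 < C ∧
      ∀ (Ω : Type) (m0 : MeasurableSpace Ω) (μ : Measure Ω),
        IsProbabilityMeasure μ →
        ∀ ℱ : Filtration ℕ m0,
        ∀ A B : ℝ, A < B →                       -- X = [A,B], diameter D = B - A > 0
        ∀ G : ℝ, 0 < G →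
        ∀ T : ℕ, 1 ≤ T →
        ∀ f : ℝ → ℝ, ConvexOn ℝ (Set.Icc A B) f →
          (∀ u ∈ Set.Icc A B, ∀ v ∈ Set.Icc A B, |f u - f v| ≤ G * |u - v|) →
        ∀ ε c : ℝ, 0 < ε → ε ≤ 1 → 0 < c → c ≤ 1 →
        ∀ (x g : ℕ → Ω → ℝ) (x₀ : ℝ), x₀ ∈ Set.Icc A B →
          -- SGD process with fixed step size η = 4D/(G√T) started from x₀
          (∀ ω, x 0 ω = x₀) →
          (∀ t, Measurable[ℱ (t + 1)] (g t)) →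
          (∀ t, ∀ᵐ ω ∂μ, |g t ω| ≤ G) →
          (∀ t ω, x (t + 1) ω =
            projInterval A B (x t ω - (4 * (B - A) / (G * Real.sqrt T)) * g t ω)) →
          (∀ t, ∀ᵐ ω ∂μ, ∀ y ∈ Set.Icc A B,
            f y - f (x t ω) ≥ (μ[g t | ℱ t]) ω * (y - x t ω)) →
          -- nearly linear condition: whenever x_t ∉ S,  |E[ĝ_t | F_t]| ∈ [cεG, εG]
          (∀ t, ∀ᵐ ω ∂μ,
            ¬ (x t ω ∈ Set.Icc A B ∧
                f (x t ω) - sInf (f '' Set.Icc A B) ≤ G * (B - A) / Real.sqrt T) →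
              |(μ[g t | ℱ t]) ω| ∈ Set.Icc (c * ε * G) (ε * G)) →
          ∫ ω, (f (x T ω) - sInf (f '' Set.Icc A B)) ∂μ ≤
            C * G * (B - A) / (c * Real.sqrt T) := by
  refine ⟨33, by norm_num, ?_⟩
  intro Ω m0 μ hμ ℱ A B hAB G hG T hT f hconv hlip ε c hε hε1 hc hc1 x g x₀ hx₀ hx0 hgm hgG hx
    hsub hlin
  have hD : 0 < B - A := by linarith
  have hTpos : (0 : ℝ) < T := by exact_mod_cast hT
  have hsT : 0 < Real.sqrt T := Real.sqrt_pos.2 hTpos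
  set η := 4 * (B - A) / (G * Real.sqrt T) with hηdef
  have hη : 0 < η := by positivity
  obtain ⟨p, q, hpq, hS, hnn⟩ := level_set A B G (G * (B - A) / Real.sqrt T) hAB (by positivity) f
    hconv hG hlip
  simp only [← hS] at hlin
  have hSX : ∀ y ∈ Set.Icc p q, y ∈ Set.Icc A B := fun y hy => ((hS y).1 hy).1
  have hxX : ∀ t ω, x t ω ∈ Set.Icc A B := by
    intro t ω
    cases t with
    | zero => rw [hx0]; exact hx₀
    | succ t => rw [hx]; exact proj_mem hAB.le
  have hxm : ∀ t, Measurable[ℱ t] (x t) := by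
    intro t
    induction t with
    | zero =>
      have : x 0 = fun _ => x₀ := funext hx0
      rw [this]; exact measurable_const
    | succ t ih =>
      have h1 : Measurable[ℱ (t + 1)] (x t) := ih.mono (ℱ.mono (Nat.le_succ t)) le_rfl
      have : x (t + 1) = fun ω => projInterval A B (x t ω - η * g t ω) := funext (hx t)
      rw [this]
      unfold projInterval
      exact measurable_const.max (measurable_const.min (h1.sub ((hgm t).const_mul η)))
  set γ := c * ε with hγ
  have hγ0 : 0 < γ := by positivity
  have hγ1 : γ ≤ 1 := by nlinarith
  set l := γ * Real.sqrt T / (8 * (B - A)) with hl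
  have hl0 : 0 < l := by positivity
  have hlG : l * η * G = γ / 2 := by
    rw [hl, hηdef]; field_simp; norm_num
  have hRm : ∀ t, Measurable[ℱ t] (fun ω => resid p q (x t ω)) := fun t =>
    (resid_cont p q).measurable.comp (hxm t)
  have hRD : ∀ t ω, |resid p q (x t ω)| ≤ B - A := by
    intro t ω
    refine (resid_near (Set.left_mem_Icc.2 hpq)).trans ?_
    have h1 := hxX t ω
    have h2 := hSX p (Set.left_mem_Icc.2 hpq)
    rw [abs_le]; constructor <;> linarith [h1.1, h1.2, h2.1, h2.2]
  -- facts about the conditional mean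
  have hdrift : ∀ t, ∀ᵐ ω ∂μ, γ * G * |Real.sinh (l * resid p q (x t ω))| ≤
      (μ[g t | ℱ t]) ω * Real.sinh (l * resid p q (x t ω)) := by
    intro t
    filter_upwards [hsub t, hlin t] with ω h1 h2
    by_cases hin : x t ω ∈ Set.Icc p q
    · rw [resid_eq_zero hin]; simp
    · have h3 := (h2 hin).1
      have hcl := clamp_mem (x := x t ω) hpq
      have h4 := h1 _ (hSX _ hcl)
      have h5 : ¬ (f (x t ω) - sInf (f '' Set.Icc A B) ≤ G * (B - A) / Real.sqrt T) := fun h =>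
        hin ((hS _).2 ⟨hxX t ω, h⟩)
      have h6 := ((hS _).1 hcl).2
      have h7 : 0 < (μ[g t | ℱ t]) ω * resid p q (x t ω) := by
        unfold resid; push Not at h5; nlinarith
      generalize (μ[g t | ℱ t]) ω = m at *
      generalize resid p q (x t ω) = r at *
      have h8 : m * Real.sinh (l * r) = |m| * |Real.sinh (l * r)| := by
        rcases pos_and_pos_or_neg_and_neg_of_mul_pos h7 with ⟨ha, hb⟩ | ⟨ha, hb⟩
        · rw [abs_of_pos ha, abs_of_pos (Real.sinh_pos_iff.2 (mul_pos hl0 hb))]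
        · rw [abs_of_neg ha, abs_of_neg (Real.sinh_neg_iff.2 (mul_neg_of_pos_of_neg hl0 hb))]
          ring
      rw [h8]
      gcongr
  have hrec : ∀ t, ∫ ω, Real.cosh (l * resid p q (x t ω)) ∂μ ≤
      (1 - γ ^ 2 / 4) ^ t * Real.exp (γ * Real.sqrt T / 8) + 2 := by
    intro t
    induction t with
    | zero =>
      have h1 : ∀ ω, Real.cosh (l * resid p q (x 0 ω)) ≤ Real.exp (γ * Real.sqrt T / 8) := by
        intro ω
        have h2 : γ * Real.sqrt T / 8 = l * (B - A) := by rw [hl]; field_simp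
        have h3 : |l * resid p q (x 0 ω)| ≤ l * (B - A) := by
          rw [abs_mul, abs_of_pos hl0]; gcongr; exact hRD 0 ω
        rw [h2, ← Real.cosh_abs]
        have h4 := Real.cosh_add_sinh |l * resid p q (x 0 ω)|
        have h5 : 0 ≤ Real.sinh |l * resid p q (x 0 ω)| := Real.sinh_nonneg_iff.2 (abs_nonneg _)
        have h6 := Real.exp_le_exp.2 h3
        linarith
      have h2 : ∀ ω, Real.cosh (l * resid p q (x 0 ω)) = Real.cosh (l * resid p q x₀) := by
        intro ω; rw [hx0]
      obtain ⟨ω⟩ : Nonempty Ω := μ.nonempty_of_neZero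
      have h3 := h1 ω
      rw [h2] at h3
      simp only [h2, integral_const, probReal_univ, smul_eq_mul, one_mul, pow_zero]
      linarith
    | succ t ih =>
      have h := one_step (μ := μ) (ℱ.le t) (fun ω => resid p q (x t ω))
        (fun ω => resid p q (x (t + 1) ω)) (g t) G (B - A) η l γ hη hl0 hγ1 hlG (hRm t)
        ((hRm (t + 1)).mono (ℱ.le _) le_rfl) ((hgm t).mono (ℱ.le _) le_rfl) (hRD t) (hRD (t + 1))
        (hgG t) (by
          intro ω
          have hcl := clamp_mem (x := x t ω) hpq
          refine (resid_near hcl).trans ?_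
          rw [hx]
          refine (proj_near (hSX _ hcl)).trans (le_of_eq ?_)
          unfold resid
          congr 1; ring) (hdrift t)
      have hρ : 0 ≤ 1 - γ ^ 2 / 4 := by nlinarith
      have h2 := mul_le_mul_of_nonneg_left ih hρ
      rw [pow_succ]
      linarith
  have hT4 : ∫ ω, Real.cosh (l * resid p q (x T ω)) ∂μ ≤ 4 := by
    linarith [hrec T, final_num T γ hγ0 hγ1]
  have hRmT : Measurable[m0] (fun ω => resid p q (x T ω)) := (hRm T).mono (ℱ.le _) le_rfl
  have iC : Integrable (fun ω => Real.cosh (l * resid p q (x T ω))) μ := by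
    refine Integrable.of_bound
      (Real.measurable_cosh.comp (hRmT.const_mul l)).aestronglyMeasurable (Real.cosh (l * (B - A))) (ae_of_all _ fun ω => ?_)
    rw [Real.norm_eq_abs, abs_cosh_eq, Real.cosh_le_cosh, abs_mul, abs_mul]
    exact mul_le_mul_of_nonneg_left ((hRD T ω).trans (le_abs_self _)) (abs_nonneg l)
  have hfin : ∫ ω, (f (x T ω) - sInf (f '' Set.Icc A B)) ∂μ ≤
      ∫ ω, (G * (B - A) / Real.sqrt T + ε * G / l * Real.cosh (l * resid p q (x T ω))) ∂μ := by
    refine integral_mono_of_nonneg (ae_of_all _ fun ω => hnn _ (hxX T ω))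
      ((integrable_const _).add (iC.const_mul _)) ?_
    filter_upwards [hsub T, hlin T] with ω h1 h2
    by_cases hin : x T ω ∈ Set.Icc p q
    · have h3 := ((hS _).1 hin).2
      have h4 : 0 ≤ ε * G / l * Real.cosh (l * resid p q (x T ω)) :=
        mul_nonneg (by positivity) (Real.cosh_pos _).le
      linarith
    · have h3 := (h2 hin).2
      have hcl := clamp_mem (x := x T ω) hpq
      have h4 := h1 _ (hSX _ hcl)
      have h6 := ((hS _).1 hcl).2
      have h7 : (μ[g T | ℱ T]) ω * resid p q (x T ω) ≤ ε * G * |resid p q (x T ω)| := by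
        refine (le_abs_self _).trans ?_
        rw [abs_mul]; gcongr
      have h8 : ε * G * |resid p q (x T ω)| ≤
          ε * G / l * Real.cosh (l * resid p q (x T ω)) := by
        have := abs_le_cosh (l * resid p q (x T ω))
        rw [abs_mul, abs_of_pos hl0] at this
        calc _ = ε * G / l * (l * |resid p q (x T ω)|) := by field_simp
          _ ≤ _ := by gcongr
      have h9 : f (x T ω) - f (max p (min q (x T ω))) ≤
          (μ[g T | ℱ T]) ω * resid p q (x T ω) := by
        unfold resid; linarith
      linarith
  refine hfin.trans ?_
  rw [integral_add (integrable_const _) (iC.const_mul _), integral_const_mul]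
  simp only [integral_const, probReal_univ, smul_eq_mul, one_mul]
  have h1 : ε * G / l * ∫ ω, Real.cosh (l * resid p q (x T ω)) ∂μ ≤ ε * G / l * 4 := by gcongr
  have h2 : ε * G / l * 4 = 32 * G * (B - A) / (c * Real.sqrt T) := by
    rw [hl, hγ]; field_simp; norm_num
  have h3 : G * (B - A) / Real.sqrt T ≤ G * (B - A) / (c * Real.sqrt T) := by
    gcongr
    nlinarith
  have h4 : 33 * G * (B - A) / (c * Real.sqrt T) =
    32 * G * (B - A) / (c * Real.sqrt T) + G * (B - A) / (c * Real.sqrt T) := by ring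
  linarith
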